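/- Let α, β ∈ (0,2) and set r* := (α+β)/4 − 1/2. Then (max(α,β))/2 − 1 < r* < (min(α,β))/2, and ∫₀^∞ ∫₀^∞ (x·y)^{r*} · u_α(−1,x) · u_β(−1,y) dx dy = 1 − [1 + cos((α+β)π/2)] / [1 + cos((α−β)π/2)]. -/

import Mathlib

open MeasureTheory Real Set

/-- The upwards-overshoot density
`u_α(x,y) = (sin(απ/2)/π) (y-x)⁻¹ (-x/y)^{α/2} 1_{[0,∞)}(y)` (for `x < 0`). -/
noncomputable def uDens (α x y : ℝ) : ℝ :=
  Set.indicator (Set.Ici (0 : ℝ))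
    (fun z => (Real.sin (α * π / 2) / π) * (z - x)⁻¹ * (-x / z) ^ (α / 2)) y

/-!
At `r = r*` both Mellin transforms `∫₀^∞ y ^ r * u_γ(-1, y) dy = sin (γπ/2) / sin (π (γ/2 - r))`,
`γ = α, β`, have the same denominator `cos ((α - β) π / 4)`: the exponent `r*` is the midpoint of
the strip where both converge. The double integral is the product of the two transforms, and
Euler's reflection formula, through the beta integral over `(0, ∞)`, evaluates each of them.
-/

lemma integral_Ioo_rpow_mul_one_sub_rpow {a b : ℝ} (ha : 0 < a) (hb : 0 < b) :
    ∫ t in Ioo (0 : ℝ) 1, t ^ (a - 1) * (1 - t) ^ (b - 1) = ProbabilityTheory.beta a b := by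
  have integrand_eq : ∀ t ∈ Ioo (0 : ℝ) 1,
      (t : ℂ) ^ ((a : ℂ) - 1) * (1 - (t : ℂ)) ^ ((b : ℂ) - 1)
        = ((t ^ (a - 1) * (1 - t) ^ (b - 1) : ℝ) : ℂ) := fun t ht ↦ by
    rw [Complex.ofReal_mul, Complex.ofReal_cpow ht.1.le, Complex.ofReal_cpow (sub_pos.2 ht.2).le]
    push_cast
    rfl
  rw [ProbabilityTheory.beta_eq_betaIntegralReal a b ha hb, Complex.betaIntegral,
    intervalIntegral.integral_of_le zero_le_one, integral_Ioc_eq_integral_Ioo,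
    setIntegral_congr_fun measurableSet_Ioo integrand_eq, integral_complex_ofReal,
    Complex.ofReal_re]

lemma bijOn_div_one_sub {K : Type*} [Field K] [LinearOrder K] [IsStrictOrderedRing K] :
    BijOn (fun t : K ↦ t / (1 - t)) (Ioo 0 1) (Ioi 0) := by
  have invOn : InvOn (fun x : K ↦ x / (1 + x)) (fun t ↦ t / (1 - t)) (Ioo 0 1) (Ioi 0) := by
    refine ⟨fun t ht ↦ ?_, fun x hx ↦ ?_⟩
    · have h : 1 - t ≠ 0 := (sub_pos.2 ht.2).ne'
      simp only
      field_simp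
      ring
    · have h : 1 + x ≠ 0 := (add_pos one_pos (mem_Ioi.1 hx)).ne'
      simp only
      field_simp
      ring
  refine invOn.bijOn (fun t ht ↦ div_pos ht.1 (sub_pos.2 ht.2)) fun x hx ↦ ?_
  have h : 0 < 1 + x := add_pos one_pos hx
  exact ⟨div_pos hx h, (div_lt_one h).2 (lt_one_add x)⟩

lemma hasDerivAt_div_one_sub {𝕜 : Type*} [NontriviallyNormedField 𝕜] {t : 𝕜} (ht : t ≠ 1) :
    HasDerivAt (fun t : 𝕜 ↦ t / (1 - t)) ((1 - t) ^ 2)⁻¹ t := by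
  convert! (hasDerivAt_id' t).fun_div ((hasDerivAt_id' t).const_sub 1) (sub_ne_zero.2 ht.symm)
    using 1
  ring

lemma integral_Ioi_eq_integral_Ioo_div_one_sub {E : Type*} [NormedAddCommGroup E]
    [NormedSpace ℝ E] (f : ℝ → E) :
    ∫ x in Ioi (0 : ℝ), f x = ∫ t in Ioo (0 : ℝ) 1, ((1 - t) ^ 2)⁻¹ • f (t / (1 - t)) := by
  rw [← bijOn_div_one_sub.image_eq, integral_image_eq_integral_abs_deriv_smul measurableSet_Ioo
    (fun t ht ↦ (hasDerivAt_div_one_sub ht.2.ne).hasDerivWithinAt) bijOn_div_one_sub.injOn]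
  simp only [abs_inv, abs_sq]

lemma integral_Ioi_rpow_mul_one_add_rpow {a b : ℝ} (ha : 0 < a) (hb : 0 < b) :
    ∫ x in Ioi (0 : ℝ), x ^ (a - 1) * (1 + x) ^ (-(a + b)) = ProbabilityTheory.beta a b := by
  rw [integral_Ioi_eq_integral_Ioo_div_one_sub, ← integral_Ioo_rpow_mul_one_sub_rpow ha hb]
  refine setIntegral_congr_fun measurableSet_Ioo fun t ht ↦ ?_
  have h : 0 < 1 - t := sub_pos.2 ht.2
  have one_add_div : 1 + t / (1 - t) = (1 - t)⁻¹ := by field_simp; ring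
  calc ((1 - t) ^ 2)⁻¹ • ((t / (1 - t)) ^ (a - 1) * (1 + t / (1 - t)) ^ (-(a + b)))
      = t ^ (a - 1) *
          ((1 - t) ^ (-2 : ℝ) * (1 - t) ^ (-(a - 1)) * (1 - t) ^ (a + b)) := by
        rw [one_add_div, div_rpow ht.1.le h.le, inv_rpow h.le, rpow_neg h.le (a + b), inv_inv,
          rpow_neg h.le (a - 1), rpow_neg h.le 2, rpow_two, smul_eq_mul]
        ring
    _ = t ^ (a - 1) * (1 - t) ^ (b - 1) := by
        rw [← rpow_add h, ← rpow_add h]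
        ring_nf

lemma integral_Ioi_rpow_mul_inv_one_add {s : ℝ} (hs₀ : 0 < s) (hs₁ : s < 1) :
    ∫ x in Ioi (0 : ℝ), x ^ (s - 1) * (1 + x)⁻¹ = π / sin (π * s) := by
  have h := integral_Ioi_rpow_mul_one_add_rpow hs₀ (sub_pos.2 hs₁)
  rw [ProbabilityTheory.beta, Gamma_mul_Gamma_one_sub, add_sub_cancel, Gamma_one, div_one] at h
  simpa only [rpow_neg_one] using h

lemma integral_Ioi_rpow_mul_inv_add {s c : ℝ} (hs₀ : 0 < s) (hs₁ : s < 1) (hc : 0 < c) :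
    ∫ x in Ioi (0 : ℝ), x ^ (s - 1) * (c + x)⁻¹ = c ^ (s - 1) * (π / sin (π * s)) := by
  have scale := integral_comp_mul_left_Ioi' (fun x : ℝ ↦ x ^ (s - 1) * (c + x)⁻¹) 0 hc
  rw [mul_zero] at scale
  rw [← scale, ← integral_Ioi_rpow_mul_inv_one_add hs₀ hs₁, smul_eq_mul, ← integral_const_mul,
    ← integral_const_mul]
  refine setIntegral_congr_fun measurableSet_Ioi fun x hx ↦ ?_
  have hx : 0 < x := hx
  simp only [mul_rpow hc.le hx.le]
  field_simp

lemma uDens_of_neg_of_pos (α : ℝ) {x y : ℝ} (hx : x < 0) (hy : 0 < y) :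
    uDens α x y =
      sin (α * π / 2) / π * (-x) ^ (α / 2) * (y ^ (-(α / 2)) * (-x + y)⁻¹) := by
  rw [uDens, indicator_of_mem (mem_Ici.2 hy.le), div_rpow (neg_pos.2 hx).le hy.le,
    rpow_neg hy.le, neg_add_eq_sub]
  ring

lemma integral_Ioi_rpow_mul_uDens {α r x : ℝ} (hr₀ : α / 2 - 1 < r) (hr₁ : r < α / 2)
    (hx : x < 0) :
    ∫ y in Ioi (0 : ℝ), y ^ r * uDens α x y
      = (-x) ^ r * (sin (α * π / 2) / sin (π * (α / 2 - r))) := by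
  have hx' : 0 < -x := neg_pos.2 hx
  have integrand_eq : ∀ y ∈ Ioi (0 : ℝ), y ^ r * uDens α x y
      = sin (α * π / 2) / π * (-x) ^ (α / 2) *
          (y ^ ((r - α / 2 + 1) - 1) * (-x + y)⁻¹) := fun y hy ↦ by
    rw [uDens_of_neg_of_pos α hx hy, add_sub_cancel_right, sub_eq_add_neg r, rpow_add hy]
    ring
  have sin_eq : sin (π * (r - α / 2 + 1)) = sin (π * (α / 2 - r)) := by
    rw [← sin_pi_sub]
    ring_nf
  rw [setIntegral_congr_fun measurableSet_Ioi integrand_eq, integral_const_mul,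
    integral_Ioi_rpow_mul_inv_add (by linarith) (by linarith) hx', sin_eq, add_sub_cancel_right,
    rpow_sub hx']
  field_simp

lemma integral_integral_mul_rpow_uDens {α β r x y : ℝ} (hr₀ : max α β / 2 - 1 < r)
    (hr₁ : r < min α β / 2) (hx : x < 0) (hy : y < 0) :
    ∫ v in Ioi (0 : ℝ), ∫ u in Ioi (0 : ℝ), (u * v) ^ r * uDens α x u * uDens β y v
      = (-x) ^ r * (sin (α * π / 2) / sin (π * (α / 2 - r))) *
          ((-y) ^ r * (sin (β * π / 2) / sin (π * (β / 2 - r)))) := by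
  have inner_eq : ∀ v ∈ Ioi (0 : ℝ),
      ∫ u in Ioi (0 : ℝ), (u * v) ^ r * uDens α x u * uDens β y v
        = (∫ u in Ioi (0 : ℝ), u ^ r * uDens α x u) * (v ^ r * uDens β y v) := fun v hv ↦ by
    rw [← integral_mul_const]
    refine setIntegral_congr_fun measurableSet_Ioi fun u hu ↦ ?_
    simp only [mul_rpow (mem_Ioi.1 hu).le (mem_Ioi.1 hv).le]
    ring
  rw [setIntegral_congr_fun measurableSet_Ioi inner_eq, integral_const_mul,
    integral_Ioi_rpow_mul_uDens (by linarith [le_max_left α β]) (by linarith [min_le_left α β]) hx,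
    integral_Ioi_rpow_mul_uDens (by linarith [le_max_right α β]) (by linarith [min_le_right α β])
      hy]

lemma sin_mul_sin_div_cos_sq {a b : ℝ} (h : cos ((a - b) / 2) ≠ 0) :
    sin a * sin b / cos ((a - b) / 2) ^ 2 = 1 - (1 + cos (a + b)) / (1 + cos (a - b)) := by
  have one_add_cos : 1 + cos (a - b) = 2 * cos ((a - b) / 2) ^ 2 := by
    rw [cos_sq, mul_div_cancel₀ _ two_ne_zero]
    ring
  have sin_mul_sin := two_mul_sin_mul_sin a b
  rw [one_add_cos]
  field_simp
  linarith

theorem overshoot_product_moment_special_general {α β : ℝ} (h : |α - β| < 2) :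
    (max α β / 2 - 1 < (α + β) / 4 - 1 / 2 ∧ (α + β) / 4 - 1 / 2 < min α β / 2) ∧
    ∫ y in Ioi (0 : ℝ), ∫ x in Ioi (0 : ℝ),
        (x * y) ^ ((α + β) / 4 - 1 / 2) * uDens α (-1) x * uDens β (-1) y
      = 1 - (1 + cos ((α + β) * π / 2)) / (1 + cos ((α - β) * π / 2)) := by
  obtain ⟨h₁, h₂⟩ := abs_lt.1 h
  have lower : max α β / 2 - 1 < (α + β) / 4 - 1 / 2 := by
    rcases max_choice α β with h | h <;> rw [h] <;> linarith
  have upper : (α + β) / 4 - 1 / 2 < min α β / 2 := by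
    rcases min_choice α β with h | h <;> rw [h] <;> linarith
  refine ⟨⟨lower, upper⟩, ?_⟩
  have sin_α : sin (π * (α / 2 - ((α + β) / 4 - 1 / 2)))
      = cos ((α * π / 2 - β * π / 2) / 2) := by
    rw [← sin_add_pi_div_two]
    ring_nf
  have sin_β : sin (π * (β / 2 - ((α + β) / 4 - 1 / 2)))
      = cos ((α * π / 2 - β * π / 2) / 2) := by
    rw [← sin_pi_div_two_sub]
    ring_nf
  have cos_pos : 0 < cos ((α * π / 2 - β * π / 2) / 2) :=
    cos_pos_of_mem_Ioo ⟨by nlinarith [pi_pos], by nlinarith [pi_pos]⟩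
  rw [integral_integral_mul_rpow_uDens lower upper neg_one_lt_zero neg_one_lt_zero, neg_neg,
    one_rpow, one_mul, one_mul, sin_α, sin_β, div_mul_div_comm, ← sq,
    sin_mul_sin_div_cos_sq cos_pos.ne', ← add_div, ← sub_div, ← add_mul, ← sub_mul]

/-- For `α, β ∈ (0,2)` and `r* = (α+β)/4 - 1/2`, one has
`max(α,β)/2 - 1 < r* < min(α,β)/2` and
`∫₀^∞ ∫₀^∞ (xy)^{r*} u_α(-1,x) u_β(-1,y) dx dy
  = 1 - (1 + cos((α+β)π/2)) / (1 + cos((α-β)π/2))`. -/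
theorem overshoot_product_moment_special
    (α β : ℝ) (hα : α ∈ Set.Ioo (0 : ℝ) 2) (hβ : β ∈ Set.Ioo (0 : ℝ) 2) :
    (max α β / 2 - 1 < (α + β) / 4 - 1 / 2 ∧ (α + β) / 4 - 1 / 2 < min α β / 2) ∧
    ∫ y in Set.Ioi (0 : ℝ), ∫ x in Set.Ioi (0 : ℝ),
        (x * y) ^ ((α + β) / 4 - 1 / 2) * uDens α (-1) x * uDens β (-1) y
      = 1 - (1 + Real.cos ((α + β) * π / 2)) / (1 + Real.cos ((α - β) * π / 2)) :=
  overshoot_product_moment_special_general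
    (abs_lt.2 ⟨by linarith [hα.1, hβ.2], by linarith [hα.2, hβ.1]⟩)
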